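/- Let n = p₁⋯p_r ∈ A be square-free monic and nonconstant with distinct monic irreducible factors p_i, let χ be a primitive Dirichlet character modulo n with values in L and sign s_χ, and let e : A → L be any 𝔽_q-linear map. Then for every nonnegative integer k such that either k = 0 or k + s_χ ≢ 0 (mod q − 1), one has ∑_{β ∈ A, deg β < deg n} χ(β)·e(β)^k = 0 in L (with the convention 0⁰ = 1). -/

import Mathlib

open Polynomial

noncomputable section

/-- The polynomial of degree `< d` with coefficient vector `c : Fin d → F`.
As `c` ranges over all of `Fin d → F`, this ranges exactly over the polynomials
of degree `< d` (each exactly once). -/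
def toPoly {F : Type} [Field F] {d : ℕ} (c : Fin d → F) : Polynomial F :=
  ∑ i : Fin d, Polynomial.C (c i) * Polynomial.X ^ (i : ℕ)


theorem toPoly_coeff {F : Type} [Field F] {d : ℕ} (c : Fin d → F) (j : ℕ) :
    (toPoly c).coeff j = if h : j < d then c ⟨j, h⟩ else 0 := by
  unfold toPoly
  simp only [finsetSum_coeff, coeff_C_mul, coeff_X_pow]
  split_ifs with h
  · rw [Finset.sum_eq_single ⟨j, h⟩]
    · simp
    · intro b _ hb
      have : j ≠ b := fun hh => hb (Fin.ext hh.symm)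
      simp [this]
    · simp
  · apply Finset.sum_eq_zero
    intro b _
    have : j ≠ b := by have := b.2; omega
    simp [this]

theorem toPoly_smul {F : Type} [Field F] {d : ℕ} (g : F) (c : Fin d → F) :
    toPoly (g • c) = g • toPoly c := by
  ext j
  simp only [toPoly_coeff, coeff_smul, Pi.smul_apply]
  split_ifs <;> simp

theorem toPoly_inj {F : Type} [Field F] {d : ℕ} {c c' : Fin d → F}
    (h : toPoly c = toPoly c') : c = c' := by
  ext i
  have := congrArg (fun P => P.coeff i) h
  simpa [toPoly_coeff] using this

theorem toPoly_of_degree_lt {F : Type} [Field F] (n P : F[X]) (h : P.degree < n.degree) :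
    toPoly (fun i : Fin n.natDegree => P.coeff i) = P := by
  ext j
  rw [toPoly_coeff]
  split_ifs with hj
  · rfl
  · symm
    apply coeff_eq_zero_of_degree_lt
    refine h.trans_le (degree_le_natDegree.trans ?_)
    exact_mod_cast not_lt.mp hj

theorem toPoly_natDegree_lt {F : Type} [Field F] (n : F[X]) (hn : n ≠ 0)
    (c : Fin n.natDegree → F) : (toPoly c).degree < n.degree := by
  rw [degree_eq_natDegree hn, degree_lt_iff_coeff_zero]
  intro m hm
  rw [toPoly_coeff, dif_neg (by omega)]

theorem exists_unit_poly {F : Type} [Field F] [Fintype F] {L : Type} [Field L] [Algebra F L]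
    (P : F[X]) (hP : P.Monic) (hI : Irreducible P) (z : L) (hz : aeval z P = 0)
    (e : ℕ) (he : 1 ≤ e ∧ e < Fintype.card F ^ P.natDegree - 1) :
    ∃ u : F[X], aeval z u ≠ 0 ∧ aeval z u ^ e ≠ 1 := by
  have : Fact (Irreducible P) := ⟨hI⟩
  let pb := AdjoinRoot.powerBasis hP.ne_zero
  have : Module.Finite F (AdjoinRoot P) := pb.finite
  have : Finite (AdjoinRoot P) := Module.finite_of_finite F
  have hcard : Nat.card (AdjoinRoot P) = Fintype.card F ^ P.natDegree := by
    rw [Module.natCard_eq_pow_finrank (K := F), pb.finrank, Nat.card_eq_fintype_card]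
    rfl
  have hu : Nat.card (AdjoinRoot P)ˣ = Fintype.card F ^ P.natDegree - 1 := by
    rw [Nat.card_units, hcard]
  obtain ⟨g, hg⟩ := exists_pow_ne_one_of_isCyclic (G := (AdjoinRoot P)ˣ) (k := e)
    (by omega) (by omega)
  let f : AdjoinRoot P →+* L := AdjoinRoot.lift (algebraMap F L) z hz
  obtain ⟨u, hu⟩ := AdjoinRoot.mk_surjective (g : AdjoinRoot P)
  have hf : aeval z u = f g := by
    rw [← hu, aeval_def]
    exact (AdjoinRoot.lift_mk hz u).symm
  refine ⟨u, ?_, ?_⟩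
  · rw [hf]; simp
  · rw [hf, ← map_pow]
    intro h
    apply hg
    ext
    apply f.injective
    simpa using h

/-- Vanishing of twisted power sums: for a primitive Dirichlet character
`χ = ∏ χ_{ζ_i}^{e_i}` of square-free nonconstant conductor `n = p₁⋯p_r`, sign
`s_χ = (∑ e_i) mod (q−1)`, and any `𝔽_q`-linear map `e : A → L`, if `k = 0` or
`k + s_χ ≢ 0 (mod q−1)` then `∑_{deg β < deg n} χ(β)·e(β)^k = 0`. -/
theorem stmt9 {F : Type} [Field F] [Fintype F] {L : Type} [Field L] [Algebra F L]
    {r : ℕ} (hr : 0 < r) (p : Fin r → Polynomial F) (ζ : Fin r → L)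
    (hp : ∀ i, (p i).Monic ∧ Irreducible (p i))
    (hdist : ∀ i i', i ≠ i' → p i ≠ p i')
    (hζ : ∀ i, Polynomial.aeval (ζ i) (p i) = 0)
    (n : Polynomial F) (hn : n = ∏ i, p i)
    (e : Fin r → ℕ)
    (he : ∀ i, 1 ≤ e i ∧ e i < Fintype.card F ^ (p i).natDegree - 1)
    (ℓ : Polynomial F →ₗ[F] L)
    (k : ℕ)
    (hk : k = 0 ∨ ¬ (Fintype.card F - 1) ∣ (k + (∑ i, e i) % (Fintype.card F - 1))) :
    ∑ c : Fin n.natDegree → F,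
        (∏ i, Polynomial.aeval (ζ i) (toPoly c) ^ e i) * (ℓ (toPoly c)) ^ k = 0 := by
  classical
  rcases hk with rfl | hk
  · have hnm : n.Monic := hn ▸ monic_prod_of_monic _ _ (fun i _ => (hp i).1)
    have hζn : ∀ i, aeval (ζ i) n = 0 := by
      intro i
      rw [hn, map_prod]
      exact Finset.prod_eq_zero (Finset.mem_univ i) (hζ i)
    let i0 : Fin r := ⟨0, hr⟩
    obtain ⟨u0, hu0, hu0e⟩ := exists_unit_poly (p i0) (hp i0).1 (hp i0).2 (ζ i0) (hζ i0)
      (e i0) (he i0)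
    have hcop : ∀ i, i ≠ i0 → IsCoprime (p i0) (p i) := by
      intro i hi
      rw [(hp i0).2.coprime_iff_not_dvd]
      intro hd
      exact hdist i0 i hi.symm (eq_of_monic_of_associated (hp i0).1 (hp i).1
        ((hp i0).2.associated_of_dvd (hp i).2 hd))
    obtain ⟨a, b, hab⟩ : IsCoprime (p i0) (∏ i ∈ Finset.univ.erase i0, p i) :=
      IsCoprime.prod_right (fun i hi => hcop i (Finset.ne_of_mem_erase hi))
    set m := ∏ i ∈ Finset.univ.erase i0, p i with hm
    let u := u0 * (b * m) + a * p i0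
    have h0 : aeval (ζ i0) u = aeval (ζ i0) u0 := by
      have h := congrArg (aeval (ζ i0)) hab
      simp only [map_add, map_mul, hζ, mul_zero, zero_add, map_one] at h
      simp only [u, map_add, map_mul, hζ, mul_zero, add_zero, h, mul_one]
    have h1 : ∀ i, i ≠ i0 → aeval (ζ i) u = 1 := by
      intro i hi
      have hm0 : aeval (ζ i) m = 0 := by
        rw [hm, map_prod]
        exact Finset.prod_eq_zero (Finset.mem_erase.2 ⟨hi, Finset.mem_univ i⟩) (hζ i)
      have h := congrArg (aeval (ζ i)) hab
      simp only [map_add, map_mul, hm0, mul_zero, add_zero, map_one] at h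
      simp only [u, map_add, map_mul, hm0, mul_zero, zero_add, h]
    have hne : ∀ i, aeval (ζ i) u ≠ 0 := by
      intro i
      by_cases hi : i = i0
      · rw [hi, h0]; exact hu0
      · rw [h1 i hi]; exact one_ne_zero
    have hnu : IsCoprime n u := by
      rw [hn]
      refine IsCoprime.prod_left (fun i _ => ?_)
      rw [(hp i).2.coprime_iff_not_dvd]
      rintro ⟨w, hw⟩
      apply hne i
      rw [hw, map_mul, hζ, zero_mul]
    let φ : (Fin n.natDegree → F) → (Fin n.natDegree → F) :=
      fun c i => ((u * toPoly c) %ₘ n).coeff i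
    have hφ : ∀ c, toPoly (φ c) = (u * toPoly c) %ₘ n := fun c =>
      toPoly_of_degree_lt n _ (degree_modByMonic_lt _ hnm)
    have hinj : Function.Injective φ := by
      intro c c' h
      have h2 := congrArg toPoly h
      rw [hφ, hφ] at h2
      have h3 : n ∣ u * (toPoly c - toPoly c') := by
        rw [← modByMonic_eq_zero_iff_dvd hnm, mul_sub, sub_modByMonic, h2, sub_self]
      have h4 := hnu.dvd_of_dvd_mul_left h3
      apply toPoly_inj
      rw [← sub_eq_zero]
      refine eq_zero_of_dvd_of_degree_lt h4 ?_
      exact (degree_sub_le _ _).trans_lt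
        (max_lt (toPoly_natDegree_lt n hnm.ne_zero c) (toPoly_natDegree_lt n hnm.ne_zero c'))
    have hbij : Function.Bijective φ := Finite.injective_iff_bijective.1 hinj
    have hev : ∀ c i, aeval (ζ i) (toPoly (φ c)) = aeval (ζ i) u * aeval (ζ i) (toPoly c) := by
      intro c i
      rw [hφ, ← map_mul]
      conv_rhs => rw [← modByMonic_add_div (u * toPoly c) n]
      rw [map_add, map_mul (aeval (ζ i)) n, hζn, zero_mul, add_zero]
    have hprod : ∏ i, aeval (ζ i) u ^ e i = aeval (ζ i0) u0 ^ e i0 := by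
      rw [Finset.prod_eq_single i0, h0]
      · intro i _ hi
        rw [h1 i hi, one_pow]
      · simp
    simp only [pow_zero, mul_one]
    set S := ∑ c : Fin n.natDegree → F, ∏ i, aeval (ζ i) (toPoly c) ^ e i with hS
    have key : S = aeval (ζ i0) u0 ^ e i0 * S := by
      conv_lhs => rw [hS, ← hbij.sum_comp]
      rw [hS, Finset.mul_sum]
      refine Finset.sum_congr rfl (fun c _ => ?_)
      rw [← hprod, ← Finset.prod_mul_distrib]
      exact Finset.prod_congr rfl (fun i _ => by rw [hev, mul_pow])
    by_contra hS0
    exact hu0e (mul_right_cancel₀ hS0 (by rw [← key, one_mul]))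
  · have hk' : ¬ (Fintype.card F - 1) ∣ (k + ∑ i, e i) := by
      intro h
      apply hk
      rw [Nat.dvd_iff_mod_eq_zero] at h ⊢
      rw [Nat.add_mod_mod]
      exact h
    obtain ⟨g, hg⟩ := IsCyclic.exists_generator (α := Fˣ)
    have hord : orderOf g = Fintype.card F - 1 := by
      rw [orderOf_eq_card_of_forall_mem_zpowers hg, Nat.card_units, Nat.card_eq_fintype_card]
    have hg1 : algebraMap F L g ^ (k + ∑ i, e i) ≠ 1 := by
      intro h
      rw [← map_pow, ← map_one (algebraMap F L)] at h
      have h2 := (algebraMap F L).injective h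
      apply hk'
      rw [← hord]
      apply orderOf_dvd_of_pow_eq_one
      ext
      simpa using h2
    have hbij : Function.Bijective (fun c : Fin n.natDegree → F => (g : F) • c) :=
      (MulAction.bijective g : Function.Bijective (fun c : Fin n.natDegree → F => g • c))
    set S := ∑ c : Fin n.natDegree → F,
        (∏ i, aeval (ζ i) (toPoly c) ^ e i) * (ℓ (toPoly c)) ^ k with hS
    have key : S = algebraMap F L g ^ (k + ∑ i, e i) * S := by
      conv_lhs => rw [hS, ← hbij.sum_comp]
      rw [hS, Finset.mul_sum]
      refine Finset.sum_congr rfl (fun c _ => ?_)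
      simp only [toPoly_smul, map_smul]
      simp only [Algebra.smul_def, mul_pow, Finset.prod_mul_distrib,
        Finset.prod_pow_eq_pow_sum, pow_add]
      ring
    by_contra hS0
    exact hg1 (mul_right_cancel₀ hS0 (by rw [← key, one_mul]))
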